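/- Let g be a post-Lie algebra over a field of characteristic zero and let {T_n} be its post-symmetric brace operations. Then for every n ≥ 2, every 1 ≤ i ≤ n−1, all x_1, …, x_n ∈ g and all y ∈ g: T_n(x_1, …, x_i, x_{i+1}, …, x_n; y) − T_n(x_1, …, x_{i+1}, x_i, …, x_n; y) = T_{n−1}(x_1, …, [x_i, x_{i+1}], …, x_n; y), where on the right-hand side the pair (x_i, x_{i+1}) is replaced by the single argument [x_i, x_{i+1}]. -/

import Mathlib

/-- The post-symmetric brace operations of a post-Lie algebra, as a single operation on
lists: `brace t [] y = y`, `brace t [x] y = t x y`, and for `n ≥ 2`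
`brace t (x :: X) y = t x (brace t X y) - ∑ₖ brace t (X with xₖ replaced by t x xₖ) y`. -/
def brace {K : Type*} [Field K] {g : Type*} [AddCommGroup g] [Module K g]
    (t : g →ₗ[K] g →ₗ[K] g) : List g → g → g
  | [], y => y
  | x :: X, y =>
      t x (brace t X y) -
        ∑ k ∈ Finset.range X.length, brace t (X.set k (t x (X.getD k 0))) y
  termination_by l _ => l.length
  decreasing_by
    all_goals (simp only [List.length_set, List.length_cons]; omega)

/-!
View `F = brace t · u` as a function of words, and let `D x` be the derivation of words acting on
letters as `t x`. The recursion reads `F (x w) = t x (F w) - F (D x w)`. For a bracket at the front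
the claim therefore compares `t ⁅x, y⁆` and `D ⁅x, y⁆` with the commutators of `t x, t y` and of
`D x, D y`: the second post-Lie axiom gives the comparison on `g`, and, since derivations are
determined by their values on letters and `F` is additive in each letter, also on words. The first
axiom says that `D z` is compatible with the relation `x y - y x = ⁅x, y⁆`, so the recursion
propagates the claim from `w` to `z w`.
-/

section LeibnizSum

variable {α M N : Type*}

/-- The action on functions of words induced by letting `d` act on words as a derivation of
concatenation: the sum of the values of `F` on the words obtained from `X` by applying `d` to one
letter. -/
def leibnizSum [AddCommMonoid M] (d : α → α) (F : List α → M) (X : List α) : M :=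
  ∑ k ∈ Finset.range X.length, F (X.modify k d)

@[simp]
theorem leibnizSum_nil [AddCommMonoid M] (d : α → α) (F : List α → M) :
    leibnizSum d F [] = 0 :=
  Finset.sum_range_zero _

theorem leibnizSum_cons [AddCommMonoid M] (d : α → α) (F : List α → M) (a : α) (X : List α) :
    leibnizSum d F (a :: X) = F (d a :: X) + leibnizSum d (fun Y => F (a :: Y)) X := by
  simp [leibnizSum, Finset.sum_range_succ', add_comm]

theorem leibnizSum_append [AddCommMonoid M] (d : α → α) (F : List α → M) (A B : List α) :
    leibnizSum d F (A ++ B) =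
      leibnizSum d (fun A' => F (A' ++ B)) A + leibnizSum d (fun B' => F (A ++ B')) B := by
  induction A generalizing F with
  | nil => simp
  | cons a A ih => simp only [List.cons_append, leibnizSum_cons, ih, add_assoc]

theorem leibnizSum_append_cons [AddCommMonoid M] (d : α → α) (F : List α → M) (A B : List α)
    (a : α) :
    leibnizSum d F (A ++ a :: B) =
      leibnizSum d (fun A' => F (A' ++ a :: B)) A + F (A ++ d a :: B) +
        leibnizSum d (fun B' => F (A ++ a :: B')) B := by
  rw [leibnizSum_append, leibnizSum_cons, add_assoc]

theorem leibnizSum_congr [AddCommMonoid M] (d : α → α) {F G : List α → M} {X : List α}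
    (h : ∀ Y : List α, Y.length = X.length → F Y = G Y) : leibnizSum d F X = leibnizSum d G X :=
  Finset.sum_congr rfl fun k _ => h _ (List.length_modify d X k)

theorem leibnizSum_add [AddCommMonoid M] (d : α → α) (F G : List α → M) (X : List α) :
    leibnizSum d (fun Y => F Y + G Y) X = leibnizSum d F X + leibnizSum d G X :=
  Finset.sum_add_distrib

theorem leibnizSum_sub [AddCommGroup M] (d : α → α) (F G : List α → M) (X : List α) :
    leibnizSum d (fun Y => F Y - G Y) X = leibnizSum d F X - leibnizSum d G X :=
  Finset.sum_sub_distrib _ _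

theorem map_leibnizSum [AddCommMonoid M] [AddCommMonoid N] {Φ : Type*} [FunLike Φ M N]
    [AddMonoidHomClass Φ M N] (f : Φ) (d : α → α) (F : List α → M) (X : List α) :
    f (leibnizSum d F X) = leibnizSum d (fun Y => f (F Y)) X :=
  map_sum f _ _

-- `leibnizSum` acts by precomposition, which reverses the order of composition of `d` and `e`.
theorem leibnizSum_commutator [AddCommGroup M] (d e : α → α) (F : List α → M) (X : List α) :
    leibnizSum d (leibnizSum e F) X - leibnizSum e (leibnizSum d F) X =
      leibnizSum (e ∘ d) F X - leibnizSum (d ∘ e) F X := by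
  induction X generalizing F with
  | nil => simp only [leibnizSum_nil, sub_self]
  | cons a X ih =>
    have tail := ih fun Y => F (a :: Y)
    simp only [leibnizSum_cons, leibnizSum_add, Function.comp_apply]
    linear_combination (norm := module) (1 : ℤ) • tail

end LeibnizSum

section Multiadditive

variable {g M : Type*}

/-- Additivity of `F` in each argument. Only words of length `n` are constrained, so that the
property can be proved for the braces one arity at a time. -/
def IsMultiadditive [Add g] [Add M] (n : ℕ) (F : List g → M) : Prop :=
  ∀ (A B : List g) (a b : g), A.length + B.length + 1 = n →
    F (A ++ (a + b) :: B) = F (A ++ a :: B) + F (A ++ b :: B)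

theorem leibnizSum_add_left [Add g] [AddCommMonoid M] (d e : g → g) {F : List g → M}
    {X : List g} (hF : IsMultiadditive X.length F) :
    leibnizSum (d + e) F X = leibnizSum d F X + leibnizSum e F X := by
  rw [leibnizSum, leibnizSum, leibnizSum, ← Finset.sum_add_distrib]
  refine Finset.sum_congr rfl fun k hk => ?_
  have hk : k < X.length := Finset.mem_range.mp hk
  simp only [List.modify_eq_take_cons_drop hk, Pi.add_apply]
  exact hF _ _ _ _ (by grind)

theorem leibnizSum_sub_left [AddGroup g] [AddCommGroup M] (d e : g → g) {F : List g → M}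
    {X : List g} (hF : IsMultiadditive X.length F) :
    leibnizSum (d - e) F X = leibnizSum d F X - leibnizSum e F X := by
  rw [eq_sub_iff_add_eq, ← leibnizSum_add_left _ _ hF, sub_add_cancel]

protected theorem IsMultiadditive.leibnizSum [Add g] [AddCommMonoid M] {Φ : Type*} [FunLike Φ g g]
    [AddHomClass Φ g g] {n : ℕ} {F : List g → M} (hF : IsMultiadditive n F) (d : Φ) :
    IsMultiadditive n (leibnizSum d F) := by
  intro A B a b hn
  have left : leibnizSum d (fun A' => F (A' ++ (a + b) :: B)) A =
      leibnizSum d (fun A' => F (A' ++ a :: B) + F (A' ++ b :: B)) A :=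
    leibnizSum_congr d fun A' hA' => hF A' B a b (by rw [hA', hn])
  have right : leibnizSum d (fun B' => F (A ++ (a + b) :: B')) B =
      leibnizSum d (fun B' => F (A ++ a :: B') + F (A ++ b :: B')) B :=
    leibnizSum_congr d fun B' hB' => hF A B' a b (by rw [hB', hn])
  simp only [leibnizSum_append_cons, left, right, leibnizSum_add, map_add, hF A B _ _ hn]
  abel

end Multiadditive

section SwapRule

variable {g M : Type*} [Bracket g g]

/-- The relation `x y - y x = ⁅x, y⁆` for the function `F` of words, in all positions preceded by
exactly `n` letters. -/
def HasSwapRule [Sub M] (n : ℕ) (F : List g → M) : Prop :=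
  ∀ (A B : List g) (x y : g), A.length = n →
    F (A ++ x :: y :: B) - F (A ++ y :: x :: B) = F (A ++ ⁅x, y⁆ :: B)

protected theorem HasSwapRule.leibnizSum [Add g] [AddCommGroup M] {n : ℕ} {F : List g → M}
    (hswap : HasSwapRule n F) (hadd : ∀ m, IsMultiadditive m F) {d : g → g}
    (hd : ∀ x y : g, d ⁅x, y⁆ = ⁅d x, y⁆ + ⁅x, d y⁆) :
    HasSwapRule n (leibnizSum d F) := by
  intro A B x y hA
  have left : leibnizSum d (fun A' => F (A' ++ ⁅x, y⁆ :: B)) A =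
      leibnizSum d (fun A' => F (A' ++ x :: y :: B) - F (A' ++ y :: x :: B)) A :=
    leibnizSum_congr d fun A' hA' => (hswap A' B x y (hA'.trans hA)).symm
  have right : leibnizSum d (fun B' => F (A ++ ⁅x, y⁆ :: B')) B =
      leibnizSum d (fun B' => F (A ++ x :: y :: B') - F (A ++ y :: x :: B')) B :=
    leibnizSum_congr d fun B' _ => (hswap A B' x y hA).symm
  have middle : F (A ++ d ⁅x, y⁆ :: B) = F (A ++ ⁅d x, y⁆ :: B) + F (A ++ ⁅x, d y⁆ :: B) := by
    rw [hd, hadd _ A B _ _ rfl]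
  simp only [leibnizSum_append_cons, leibnizSum_cons, left, middle, right, leibnizSum_sub,
    ← hswap A B _ _ hA]
  abel

end SwapRule

section Brace

variable {K g : Type*} [Field K] [AddCommGroup g] [Module K g] (t : g →ₗ[K] g →ₗ[K] g)

theorem brace_cons (x : g) (X : List g) (u : g) :
    brace t (x :: X) u = t x (brace t X u) - leibnizSum (t x) (brace t · u) X := by
  have set_eq_modify (k : ℕ) : X.set k (t x (X.getD k 0)) = X.modify k (t x) := by
    let _ : Inhabited g := ⟨0⟩
    exact (List.modify_eq_set _ _ _).symm
  simp only [brace, leibnizSum, set_eq_modify]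

theorem isMultiadditive_brace (u : g) (n : ℕ) : IsMultiadditive n (brace t · u) := by
  induction n with
  | zero => intro A B a b hn; omega
  | succ n ih =>
    rintro (_ | ⟨c, A⟩) B a b hn
    · obtain rfl : B.length = n := by simpa using hn
      have coe_add : ⇑(t (a + b)) = t a + t b := by rw [map_add]; rfl
      simp only [List.nil_append, brace_cons, coe_add, Pi.add_apply, leibnizSum_add_left _ _ ih]
      abel
    · have hn : A.length + B.length + 1 = n := by grind
      simp only [List.cons_append, brace_cons, ih A B a b hn, ih.leibnizSum (t c) A B a b hn,
        map_add]
      abel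

theorem brace_cons_cons (x y : g) (B : List g) (u : g) :
    brace t (x :: y :: B) u =
      t x (t y (brace t B u)) - t x (leibnizSum (t y) (brace t · u) B) -
        t y (leibnizSum (t x) (brace t · u) B) +
        leibnizSum (t x) (leibnizSum (t y) (brace t · u)) B - brace t (t x y :: B) u := by
  rw [brace_cons, leibnizSum_cons]
  simp only [brace_cons t y, leibnizSum_sub, ← map_leibnizSum, map_sub]
  abel

variable [Bracket g g]

theorem hasSwapRule_brace_zero
    (t_bracket : ∀ x y z : g, t ⁅x, y⁆ z =
      (t x (t y z) - t (t x y) z) - (t y (t x z) - t (t y x) z))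
    (u : g) : HasSwapRule 0 (brace t · u) := by
  intro A B x y hA
  obtain rfl := List.length_eq_zero_iff.mp hA
  have coe_t_bracket : ⇑(t ⁅x, y⁆) = (t x ∘ t y - t (t x y)) - (t y ∘ t x - t (t y x)) :=
    funext (t_bracket x y)
  have hadd := isMultiadditive_brace t u B.length
  have leibnizSum_bracket : leibnizSum (t ⁅x, y⁆) (brace t · u) B =
      leibnizSum (t x ∘ t y) (brace t · u) B - leibnizSum (t (t x y)) (brace t · u) B -
        (leibnizSum (t y ∘ t x) (brace t · u) B - leibnizSum (t (t y x)) (brace t · u) B) := by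
    simp only [coe_t_bracket, leibnizSum_sub_left _ _ hadd]
  have commutator := leibnizSum_commutator (t x) (t y) (brace t · u) B
  simp only [List.nil_append]
  rw [brace_cons_cons, brace_cons_cons, brace_cons t (t x y), brace_cons t (t y x),
    brace_cons t ⁅x, y⁆, leibnizSum_bracket, t_bracket]
  linear_combination (norm := module) (1 : ℤ) • commutator

theorem hasSwapRule_brace
    (t_leibniz : ∀ z x y : g, t z ⁅x, y⁆ = ⁅t z x, y⁆ + ⁅x, t z y⁆)
    (t_bracket : ∀ x y z : g, t ⁅x, y⁆ z =
      (t x (t y z) - t (t x y) z) - (t y (t x z) - t (t y x) z))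
    (u : g) (n : ℕ) : HasSwapRule n (brace t · u) := by
  induction n with
  | zero => exact hasSwapRule_brace_zero t t_bracket u
  | succ n ih =>
    rintro (_ | ⟨c, A⟩) B x y hA
    · simp at hA
    have hA : A.length = n := by simpa using hA
    have outer := congrArg (t c) (ih A B x y hA)
    have inner := ih.leibnizSum (isMultiadditive_brace t u) (t_leibniz c) A B x y hA
    simp only [List.cons_append, brace_cons, ← outer, ← inner, map_sub]
    abel

end Brace

theorem brace_swap_adjacent_general {K : Type*} [Field K]
    {g : Type*} [AddCommGroup g] [Module K g] [Bracket g g] (t : g →ₗ[K] g →ₗ[K] g)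
    (h1 : ∀ z x y : g, t z ⁅x, y⁆ = ⁅t z x, y⁆ + ⁅x, t z y⁆)
    (h2 : ∀ x y z : g, t ⁅x, y⁆ z =
      (t x (t y z) - t (t x y) z) - (t y (t x z) - t (t y x) z))
    (A B : List g) (x y u : g) :
    brace t (A ++ x :: y :: B) u - brace t (A ++ y :: x :: B) u
      = brace t (A ++ ⁅x, y⁆ :: B) u :=
  hasSwapRule_brace t h1 h2 u A.length A B x y rfl

/-- Swapping two adjacent arguments of the post-symmetric brace `T_n` changes the result
by the brace `T_{n-1}` with the pair replaced by its Lie bracket: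
`T_n(…, xᵢ, xᵢ₊₁, …; y) − T_n(…, xᵢ₊₁, xᵢ, …; y) = T_{n−1}(…, [xᵢ, xᵢ₊₁], …; y)`. -/
theorem brace_swap_adjacent {K : Type*} [Field K] [CharZero K]
    {g : Type*} [LieRing g] [LieAlgebra K g] (t : g →ₗ[K] g →ₗ[K] g)
    (h1 : ∀ z x y : g, t z ⁅x, y⁆ = ⁅t z x, y⁆ + ⁅x, t z y⁆)
    (h2 : ∀ x y z : g, t ⁅x, y⁆ z =
      (t x (t y z) - t (t x y) z) - (t y (t x z) - t (t y x) z))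
    (A B : List g) (x y u : g) :
    brace t (A ++ x :: y :: B) u - brace t (A ++ y :: x :: B) u
      = brace t (A ++ ⁅x, y⁆ :: B) u :=
  brace_swap_adjacent_general t h1 h2 A B x y u
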